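/- Fix an integer N ≥ 2, t ∈ [0,1] and n ≥ 0. Then for every x ∈ [0,1], |F^t_{N,n}(x) − G_N(x)| ≤ β_N · α^t_{N,n}, where β_N = 2N − 1 − 2√(N(N−1)). -/

import Mathlib

open MeasureTheory Set Real Filter

/-- The Rényi-type continued fraction map `R_N`. -/
noncomputable def RN (N : ℕ) (x : ℝ) : ℝ :=
  if x = 1 then 0 else (N : ℝ) / (1 - x) - ⌊(N : ℝ) / (1 - x)⌋

/-- `digit N k x` is the `(k+1)`-st digit `a_{k+1}(x)`. -/
noncomputable def digit (N k : ℕ) (x : ℝ) : ℤ :=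
  ⌊(N : ℝ) / (1 - (RN N)^[k] x)⌋

/-- The conditional probability measure `ρ^t_N`, with density
`N(N-1+t)/[N-(1-x)(1-t)]²` on `[0,1]`. -/
noncomputable def rhoT (N : ℕ) (t : ℝ) : Measure ℝ :=
  (volume.restrict (Set.Icc (0 : ℝ) 1)).withDensity fun x =>
    ENNReal.ofReal ((N : ℝ) * ((N : ℝ) - 1 + t) / ((N : ℝ) - (1 - x) * (1 - t)) ^ 2)

/-- The invariant probability measure `ρ_N`, with density
`(log(N/(N-1)))⁻¹/(x+N-1)` on `[0,1]`. -/
noncomputable def rhoN (N : ℕ) : Measure ℝ :=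
  (volume.restrict (Set.Icc (0 : ℝ) 1)).withDensity fun x =>
    ENNReal.ofReal ((Real.log ((N : ℝ) / ((N : ℝ) - 1)))⁻¹ / (x + (N : ℝ) - 1))

/-- `s^t_{N,k}(y)` built from the digits of `y`. -/
noncomputable def sVar (N : ℕ) (t y : ℝ) : ℕ → ℝ
  | 0 => t
  | k + 1 => 1 - (N : ℝ) / ((digit N k y : ℝ) + sVar N t y k)

/-- `F^t_{N,n}(x) = ρ^t_N(R_N^n < x)`. -/
noncomputable def FF (N : ℕ) (t : ℝ) (n : ℕ) (x : ℝ) : ℝ :=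
  (rhoT N t {y | (RN N)^[n] y < x}).toReal

/-- `G_N(s) = ρ_N([0,s])`. -/
noncomputable def GN (N : ℕ) (s : ℝ) : ℝ := (rhoN N (Set.Icc 0 s)).toReal

/-- `G^t_{N,n}(s)`. -/
noncomputable def Gt (N : ℕ) (t : ℝ) : ℕ → ℝ → ℝ
  | 0 => fun s => if s ≤ t then 0 else 1
  | n + 1 => fun s => (rhoT N t {y | sVar N t y (n + 1) < s}).toReal

/-- `α^t_{N,n} = sup_{s ∈ [0,1]} |G^t_{N,n}(s) − G_N(s)|`. -/
noncomputable def alpha (N : ℕ) (t : ℝ) (n : ℕ) : ℝ :=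
  ⨆ s : Set.Icc (0 : ℝ) 1, |Gt N t n s - GN N s|

/-- Density of `ρ^t_N`. -/
noncomputable def dens (N : ℕ) (t x : ℝ) : ℝ :=
  (N : ℝ) * ((N : ℝ) - 1 + t) / ((N : ℝ) - (1 - x) * (1 - t)) ^ 2

/-- Distribution function of `ρ^t_N`. -/
noncomputable def hh (N : ℕ) (x t : ℝ) : ℝ :=
  (N : ℝ) * x / ((N : ℝ) - (1 - x) * (1 - t))

/-- Minus the derivative of `hh` in its second argument. -/
noncomputable def kk (N : ℕ) (x s : ℝ) : ℝ :=
  (N : ℝ) * x * (1 - x) / ((N : ℝ) - (1 - x) * (1 - s)) ^ 2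

lemma den_pos {N : ℕ} (hN : 2 ≤ N) {t x : ℝ} (ht : t ∈ Icc (0:ℝ) 1) (hx : x ∈ Icc (0:ℝ) 1) :
    0 < (N : ℝ) - (1 - x) * (1 - t) := by
  have h2 : (2:ℝ) ≤ N := by exact_mod_cast hN
  obtain ⟨a, b⟩ := ht
  obtain ⟨c, d⟩ := hx
  nlinarith [mul_nonneg a c, mul_nonneg (sub_nonneg.2 b) c]

lemma dens_meas (N : ℕ) (t : ℝ) : Measurable (dens N t) := by
  unfold dens; fun_prop

lemma lintegral_rhoT (N : ℕ) (t : ℝ) (g : ℝ → ENNReal) :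
    ∫⁻ y, g y ∂(rhoT N t) = ∫⁻ y in Ico (0:ℝ) 1, ENNReal.ofReal (dens N t y) * g y := by
  have : rhoT N t = (volume.restrict (Ico (0:ℝ) 1)).withDensity
      (fun y => ENNReal.ofReal (dens N t y)) := by
    unfold rhoT
    rw [Measure.restrict_congr_set (Ico_ae_eq_Icc (a := (0:ℝ)) (b := 1) (μ := volume)).symm]
    rfl
  rw [this, lintegral_withDensity_eq_lintegral_mul_non_measurable]
  · rfl
  · exact (dens_meas N t).ennreal_ofReal
  · exact Eventually.of_forall fun _ => ENNReal.ofReal_lt_top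

lemma dens_nonneg {N : ℕ} (hN : 2 ≤ N) {t : ℝ} (ht : t ∈ Icc (0:ℝ) 1) (x : ℝ) :
    0 ≤ dens N t x := by
  have h2 : (2:ℝ) ≤ N := by exact_mod_cast hN
  unfold dens
  have : 0 ≤ (N:ℝ) - 1 + t := by linarith [ht.1]
  positivity

lemma hh_deriv_x {N : ℕ} (hN : 2 ≤ N) {t x : ℝ} (ht : t ∈ Icc (0:ℝ) 1) (hx : x ∈ Icc (0:ℝ) 1) :
    HasDerivAt (fun x => hh N x t) (dens N t x) x := by
  have hp := (den_pos hN ht hx).ne'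
  have h1 : HasDerivAt (fun x : ℝ => (N:ℝ) * x) ((N:ℝ) * 1) x := (hasDerivAt_id x).const_mul _
  have h2 : HasDerivAt (fun x : ℝ => (N : ℝ) - (1 - x) * (1 - t)) (-(-1 * (1 - t))) x :=
    (((hasDerivAt_id x).const_sub 1).mul_const (1 - t)).const_sub (N:ℝ)
  exact (h1.fun_div h2 hp).congr_deriv (by unfold dens; ring)

lemma hh_deriv_s {N : ℕ} (hN : 2 ≤ N) {s x : ℝ} (hs : s ∈ Icc (0:ℝ) 1) (hx : x ∈ Icc (0:ℝ) 1) :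
    HasDerivAt (fun s => hh N x s) (-kk N x s) s := by
  have hp := (den_pos hN hs hx).ne'
  have h1 : HasDerivAt (fun _ : ℝ => (N:ℝ) * x) 0 s := hasDerivAt_const _ _
  have h2 : HasDerivAt (fun s : ℝ => (N : ℝ) - (1 - x) * (1 - s)) (-((1 - x) * (-1))) s :=
    (((hasDerivAt_id s).const_sub 1).const_mul (1 - x)).const_sub (N:ℝ)
  exact (h1.fun_div h2 hp).congr_deriv (by unfold kk; ring)

lemma kk_contOn {N : ℕ} (hN : 2 ≤ N) {x : ℝ} (hx : x ∈ Icc (0:ℝ) 1) :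
    ContinuousOn (kk N x) (Icc 0 1) := by
  unfold kk
  apply ContinuousOn.div (by fun_prop) (by fun_prop)
  intro s hs
  exact pow_ne_zero _ (den_pos hN hs hx).ne'

lemma dens_contOn {N : ℕ} (hN : 2 ≤ N) {t : ℝ} (ht : t ∈ Icc (0:ℝ) 1) :
    ContinuousOn (dens N t) (Icc 0 1) := by
  unfold dens
  apply ContinuousOn.div (by fun_prop) (by fun_prop)
  intro s hs
  exact pow_ne_zero _ (den_pos hN ht hs).ne'

lemma kk_integral {N : ℕ} (hN : 2 ≤ N) {x : ℝ} (hx : x ∈ Icc (0:ℝ) 1) {s : ℝ}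
    (hs : s ∈ Icc (0:ℝ) 1) : ∫ u in s..1, kk N x u = hh N x s - hh N x 1 := by
  have hsub : uIcc s 1 ⊆ Icc 0 1 := by
    rw [uIcc_of_le hs.2]; exact Icc_subset_Icc_left hs.1
  have := intervalIntegral.integral_eq_sub_of_hasDerivAt (a := s) (b := 1)
    (f := fun u => - hh N x u) (f' := kk N x)
    (fun u hu => by simpa using (hh_deriv_s hN (hsub hu) hx).fun_neg)
    ((kk_contOn hN hx).mono hsub).intervalIntegrable
  rw [this]; ring

lemma rhoT_Iio {N : ℕ} (hN : 2 ≤ N) {t : ℝ} (ht : t ∈ Icc (0:ℝ) 1) {x : ℝ}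
    (hx : x ∈ Icc (0:ℝ) 1) : rhoT N t {y | y < x} = ENNReal.ofReal (hh N x t) := by
  have hm : MeasurableSet {y : ℝ | y < x} := measurableSet_Iio
  rw [← lintegral_indicator_one hm, lintegral_rhoT]
  have e : (fun y => ENNReal.ofReal (dens N t y) * ({y : ℝ | y < x}.indicator 1 y)) =
      (Iio x).indicator (fun y => ENNReal.ofReal (dens N t y)) := by
    ext y
    by_cases h : y < x <;> simp [h, indicator]
  rw [e, lintegral_indicator measurableSet_Iio, Measure.restrict_restrict measurableSet_Iio]
  have e2 : Iio x ∩ Ico (0:ℝ) 1 = Ico 0 x := by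
    ext y; simp only [mem_inter_iff, mem_Iio, mem_Ico]
    constructor
    · rintro ⟨a, b, c⟩; exact ⟨b, a⟩
    · rintro ⟨a, b⟩; exact ⟨b, a, lt_of_lt_of_le b hx.2⟩
  have hsub : uIcc 0 x ⊆ Icc 0 1 := by
    rw [uIcc_of_le hx.1]; exact Icc_subset_Icc_right hx.2
  have hi : IntervalIntegrable (dens N t) volume 0 x :=
    ((dens_contOn hN ht).mono hsub).intervalIntegrable
  rw [e2, Measure.restrict_congr_set Ico_ae_eq_Ioc, ← ofReal_integral_eq_lintegral_ofReal hi.1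
    (Eventually.of_forall fun y => dens_nonneg hN ht y), ← intervalIntegral.integral_of_le hx.1,
    intervalIntegral.integral_eq_sub_of_hasDerivAt (fun u hu => hh_deriv_x hN ht (hsub hu)) hi]
  simp [hh]

lemma hh_one {N : ℕ} (hN : 2 ≤ N) (t : ℝ) : hh N 1 t = 1 := by
  have h2 : (2:ℝ) ≤ N := by exact_mod_cast hN
  have : (N:ℝ) ≠ 0 := by positivity
  simp [hh, this]

lemma rhoT_univ {N : ℕ} (hN : 2 ≤ N) {t : ℝ} (ht : t ∈ Icc (0:ℝ) 1) : rhoT N t univ = 1 := by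
  have h := rhoT_Iio hN ht (x := 1) (by simp)
  rw [hh_one hN] at h
  rw [← lintegral_one, lintegral_rhoT] 
  have hm : MeasurableSet {y : ℝ | y < 1} := measurableSet_Iio
  rw [← lintegral_indicator_one hm, lintegral_rhoT] at h
  rw [ENNReal.ofReal_one] at h
  refine Eq.trans ?_ h
  apply setLIntegral_congr_fun measurableSet_Ico
  intro y hy
  simp [indicator, hy.2]

/-- Inverse branch. -/
noncomputable def phi (N k : ℕ) (w : ℝ) : ℝ := 1 - (N : ℝ) / ((N:ℝ) + k + w)

/-- First-digit cylinders. -/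
def cyl (N k : ℕ) : Set ℝ := Ico (0:ℝ) 1 ∩ {y | ⌊(N : ℝ) / (1 - y)⌋ = (N:ℤ) + k}

lemma cyl_meas (N k : ℕ) : MeasurableSet (cyl N k) := by
  apply measurableSet_Ico.inter
  have : Measurable fun y : ℝ => ⌊(N : ℝ) / (1 - y)⌋ := by fun_prop
  exact this (measurableSet_singleton _)

lemma phi_spec {N : ℕ} (hN : 2 ≤ N) (k : ℕ) {w : ℝ} (hw : w ∈ Ico (0:ℝ) 1) :
    phi N k w ∈ cyl N k ∧ RN N (phi N k w) = w := by
  have h2 : (2:ℝ) ≤ N := by exact_mod_cast hN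
  have hk : (0:ℝ) ≤ k := by positivity
  have hp : 0 < (N:ℝ) + k + w := by linarith [hw.1]
  have e : (N:ℝ) / (1 - phi N k w) = N + k + w := by
    unfold phi
    rw [sub_sub_cancel, div_div_cancel₀ (by positivity)]
  have ef : ⌊(N:ℝ) / (1 - phi N k w)⌋ = (N:ℤ) + k := by
    rw [e, Int.floor_eq_iff]; push_cast
    exact ⟨by linarith [hw.1], by linarith [hw.2]⟩
  have hlt : phi N k w < 1 := by
    have : 0 < (N:ℝ) / ((N:ℝ) + k + w) := by positivity
    unfold phi; linarith
  refine ⟨⟨⟨?_, hlt⟩, ef⟩, ?_⟩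
  · unfold phi
    rw [sub_nonneg, div_le_one hp]; linarith [hw.1]
  · unfold RN
    rw [if_neg hlt.ne, ef, e]; push_cast; ring

lemma phi_image {N : ℕ} (hN : 2 ≤ N) (k : ℕ) : phi N k '' Ico 0 1 = cyl N k := by
  have h2 : (2:ℝ) ≤ N := by exact_mod_cast hN
  ext y
  constructor
  · rintro ⟨w, hw, rfl⟩; exact (phi_spec hN k hw).1
  · rintro ⟨⟨h0, h1⟩, hf⟩
    simp only [mem_ofPred_eq] at hf
    have h3 : 0 < 1 - y := by linarith
    refine ⟨(N:ℝ) / (1 - y) - ((N:ℝ) + k), ?_, ?_⟩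
    · rw [Int.floor_eq_iff] at hf; push_cast at hf
      exact ⟨by linarith, by linarith⟩
    · unfold phi
      have : (N:ℝ) + k + ((N:ℝ) / (1 - y) - ((N:ℝ) + k)) = N / (1 - y) := by ring
      rw [this]; field_simp; ring

lemma RN_mem {N : ℕ} {y : ℝ} (hy : y ∈ Ico (0:ℝ) 1) : RN N y ∈ Ico (0:ℝ) 1 := by
  unfold RN
  rw [if_neg hy.2.ne]
  exact ⟨Int.fract_nonneg _, Int.fract_lt_one _⟩

lemma floor_ge {N : ℕ} {y : ℝ} (hy : y ∈ Ico (0:ℝ) 1) : (N:ℤ) ≤ ⌊(N : ℝ) / (1 - y)⌋ := by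
  have h3 : 0 < 1 - y := by linarith [hy.2]
  rw [Int.le_floor, le_div_iff₀ h3]
  push_cast
  nlinarith [hy.1, (Nat.cast_nonneg N : (0:ℝ) ≤ N)]

lemma iUnion_cyl (N : ℕ) : ⋃ k, cyl N k = Ico 0 1 := by
  ext y
  simp only [mem_iUnion]
  constructor
  · rintro ⟨k, hk⟩; exact hk.1
  · intro hy
    have := floor_ge (N := N) hy
    refine ⟨(⌊(N : ℝ) / (1 - y)⌋ - N).toNat, hy, ?_⟩
    simp only [mem_ofPred_eq]
    omega

lemma cyl_disj (N : ℕ) : Pairwise (Function.onFun Disjoint (cyl N)) := by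
  intro i j hij
  rw [Function.onFun, Set.disjoint_left]
  rintro y ⟨_, h1⟩ ⟨_, h2⟩
  simp only [mem_ofPred_eq] at h1 h2
  omega

/-- Updated parameter. -/
noncomputable def SS (N k : ℕ) (s : ℝ) : ℝ := 1 - (N : ℝ) / ((N:ℝ) + k + s)

lemma SS_mem {N : ℕ} (hN : 2 ≤ N) (k : ℕ) {s : ℝ} (hs : s ∈ Icc (0:ℝ) 1) :
    SS N k s ∈ Icc (0:ℝ) 1 := by
  have h2 : (2:ℝ) ≤ N := by exact_mod_cast hN
  have hk : (0:ℝ) ≤ k := by positivity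
  have hp : 0 < (N:ℝ) + k + s := by linarith [hs.1]
  unfold SS
  constructor
  · rw [sub_nonneg, div_le_one hp]; linarith [hs.1]
  · have : 0 < (N:ℝ) / ((N:ℝ) + k + s) := by positivity
    linarith

/-- Probability of the cylinder. -/
noncomputable def pp (N k : ℕ) (s : ℝ) : ℝ :=
  ((N:ℝ) - 1 + s) / (((N:ℝ) + k + s) * ((N:ℝ) + k + s - 1))

lemma dens_key {N : ℕ} (hN : 2 ≤ N) (k : ℕ) {s w : ℝ} (hs : s ∈ Icc (0:ℝ) 1)
    (hw : w ∈ Ico (0:ℝ) 1) :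
    (N:ℝ) / ((N:ℝ) + k + w) ^ 2 * dens N s (phi N k w) = pp N k s * dens N (SS N k s) w := by
  have h2 : (2:ℝ) ≤ N := by exact_mod_cast hN
  have hk : (0:ℝ) ≤ k := by positivity
  obtain ⟨a, b⟩ := hs
  obtain ⟨c, d⟩ := hw
  have h0 : (N:ℝ) ≠ 0 := by positivity
  have h3 : (N:ℝ) + k + w ≠ 0 := by positivity
  have h4 : (N:ℝ) + k + s ≠ 0 := by positivity
  have h5 : (N:ℝ) + k + s - 1 ≠ 0 := ne_of_gt (by linarith)
  have h6 : (N:ℝ) + k + s - 1 + w ≠ 0 := ne_of_gt (by linarith)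
  have e1 : (N:ℝ) - (1 - phi N k w) * (1 - s) =
      N * ((N:ℝ) + k + s - 1 + w) / ((N:ℝ) + k + w) := by
    unfold phi; field_simp; ring
  have e2 : (N:ℝ) - (1 - w) * (1 - SS N k s) =
      N * ((N:ℝ) + k + s - 1 + w) / ((N:ℝ) + k + s) := by
    unfold SS; field_simp; ring
  have e3 : (N:ℝ) - 1 + SS N k s = N * ((N:ℝ) + k + s - 1) / ((N:ℝ) + k + s) := by
    unfold SS; field_simp; ring
  unfold dens pp
  rw [e1, e2, e3]
  field_simp

lemma phi_deriv {N : ℕ} (hN : 2 ≤ N) (k : ℕ) {w : ℝ} (hw : w ∈ Ico (0:ℝ) 1) :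
    HasDerivAt (phi N k) ((N:ℝ) / ((N:ℝ) + k + w) ^ 2) w := by
  have h2 : (2:ℝ) ≤ N := by exact_mod_cast hN
  have hk : (0:ℝ) ≤ k := by positivity
  have h3 : (N:ℝ) + k + w ≠ 0 := by have := hw.1; positivity
  have h1 : HasDerivAt (fun _ : ℝ => (N:ℝ)) 0 w := hasDerivAt_const _ _
  have h4 : HasDerivAt (fun w : ℝ => (N : ℝ) + k + w) 1 w := (hasDerivAt_id w).const_add _
  exact ((h1.fun_div h4 h3).const_sub 1).congr_deriv (by ring)

lemma one_step {N : ℕ} (hN : 2 ≤ N) {s : ℝ} (hs : s ∈ Icc (0:ℝ) 1) (k : ℕ) (g : ℝ → ENNReal) :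
    ∫⁻ y in cyl N k, ENNReal.ofReal (dens N s y) * g (RN N y) =
      ENNReal.ofReal (pp N k s) * ∫⁻ w, g w ∂(rhoT N (SS N k s)) := by
  have hinj : InjOn (phi N k) (Ico 0 1) := by
    intro a ha b hb hab
    rw [← (phi_spec hN k ha).2, hab, (phi_spec hN k hb).2]
  rw [← phi_image hN k, lintegral_image_eq_lintegral_abs_deriv_mul measurableSet_Ico
    (fun w hw => (phi_deriv hN k hw).hasDerivWithinAt) hinj, lintegral_rhoT,
    ← lintegral_const_mul' _ _ ENNReal.ofReal_ne_top]
  apply setLIntegral_congr_fun measurableSet_Ico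
  intro w hw
  have h2 : (2:ℝ) ≤ N := by exact_mod_cast hN
  have hk : (0:ℝ) ≤ k := by positivity
  have hp : 0 ≤ pp N k s := by
    have := hs.1
    unfold pp
    apply div_nonneg (by linarith)
    apply mul_nonneg <;> linarith
  have h3 : 0 ≤ (N:ℝ) / ((N:ℝ) + k + w) ^ 2 := by positivity
  simp only
  rw [(phi_spec hN k hw).2, abs_of_nonneg h3, ← mul_assoc, ← mul_assoc, ← ENNReal.ofReal_mul h3,
    ← ENNReal.ofReal_mul hp, dens_key hN k hs hw]

/-- Decomposition over the first digit. -/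
lemma decomp {N : ℕ} (hN : 2 ≤ N) {s : ℝ} (hs : s ∈ Icc (0:ℝ) 1) (f : ℝ → ENNReal)
    (g : ℕ → ℝ → ENNReal) (hfg : ∀ k, ∀ y ∈ cyl N k, f y = g k (RN N y)) :
    ∫⁻ y, f y ∂(rhoT N s) =
      ∑' k, ENNReal.ofReal (pp N k s) * ∫⁻ w, g k w ∂(rhoT N (SS N k s)) := by
  rw [lintegral_rhoT, ← iUnion_cyl N, lintegral_iUnion (cyl_meas N) (cyl_disj N)]
  congr 1
  ext k
  rw [← one_step hN hs]
  apply setLIntegral_congr_fun (cyl_meas N k)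
  intro y hy
  simp only
  rw [hfg k y hy]

lemma sVar_shift (N : ℕ) (t y : ℝ) (n : ℕ) :
    sVar N t y (n + 1) = sVar N (1 - (N : ℝ) / ((digit N 0 y : ℝ) + t)) (RN N y) n := by
  induction n with
  | zero => rfl
  | succ n ih =>
    rw [sVar, ih]
    rfl

lemma RN_meas (N : ℕ) : Measurable (RN N) := by
  unfold RN
  apply Measurable.ite (measurableSet_singleton _) measurable_const
  fun_prop

lemma sVar_meas (N : ℕ) (t : ℝ) (n : ℕ) : Measurable (fun y => sVar N t y n) := by
  induction n with
  | zero => exact measurable_const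
  | succ n ih =>
    have h1 : Measurable ((RN N)^[n]) := (RN_meas N).iterate n
    have h2 : Measurable fun y => (digit N n y : ℝ) := by
      unfold digit; fun_prop
    simp only [sVar]
    fun_prop

lemma sVar_mem {N : ℕ} (hN : 2 ≤ N) {t : ℝ} (ht : t ∈ Icc (0:ℝ) 1) {y : ℝ}
    (hy : y ∈ Ico (0:ℝ) 1) (n : ℕ) : sVar N t y n ∈ Icc (0:ℝ) 1 := by
  induction n with
  | zero => exact ht
  | succ n ih =>
    have hm : (RN N)^[n] y ∈ Ico (0:ℝ) 1 := by
      clear ih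
      induction n with
      | zero => exact hy
      | succ n ih => rw [Function.iterate_succ_apply']; exact RN_mem ih
    have hd : (N:ℝ) ≤ (digit N n y : ℝ) := by exact_mod_cast floor_ge hm
    have h2 : (2:ℝ) ≤ N := by exact_mod_cast hN
    have hp : 0 < (digit N n y : ℝ) + sVar N t y n := by linarith [ih.1]
    rw [sVar]
    constructor
    · rw [sub_nonneg, div_le_one hp]; linarith [ih.1]
    · have : 0 < (N:ℝ) / ((digit N n y : ℝ) + sVar N t y n) := by positivity
      linarith

/-- Brodén–Borel–Lévy. -/
lemma BBL {N : ℕ} (hN : 2 ≤ N) {x : ℝ} (hx : x ∈ Icc (0:ℝ) 1) (n : ℕ) :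
    ∀ t ∈ Icc (0:ℝ) 1, rhoT N t {y | (RN N)^[n] y < x} =
      ∫⁻ y, ENNReal.ofReal (hh N x (sVar N t y n)) ∂(rhoT N t) := by
  have hm : ∀ n, MeasurableSet {y | (RN N)^[n] y < x} := fun n =>
    measurableSet_lt ((RN_meas N).iterate n) measurable_const
  induction n with
  | zero =>
    intro t ht
    simp only [sVar, Function.iterate_zero, id_eq, lintegral_const, rhoT_univ hN ht, mul_one]
    exact rhoT_Iio hN ht hx
  | succ n ih =>
    intro t ht
    rw [← lintegral_indicator_one (hm (n+1))]
    rw [decomp hN ht _ (fun _ w => ({y | (RN N)^[n] y < x} : Set ℝ).indicator 1 w)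
        (by intro k y _; rfl),
      decomp hN ht _ (fun k w => ENNReal.ofReal (hh N x (sVar N (SS N k t) w n)))]
    · congr 1
      ext k
      rw [lintegral_indicator_one (hm n), ih _ (SS_mem hN k ht)]
    · intro k y hy
      rw [sVar_shift]
      have : digit N 0 y = (N:ℤ) + k := hy.2
      rw [this, SS]
      push_cast
      rfl

lemma rhoT_ae (N : ℕ) (t : ℝ) : ∀ᵐ y ∂(rhoT N t), y ∈ Ico (0:ℝ) 1 := by
  rw [ae_iff, ← lintegral_indicator_one (by exact measurableSet_Ico.compl), lintegral_rhoT]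
  rw [setLIntegral_congr_fun (g := fun _ => 0) measurableSet_Ico]
  · simp
  · intro y hy
    have : ¬ (y ∈ {a | a ∉ Ico (0:ℝ) 1}) := fun h => h hy
    simp only
    rw [indicator_of_notMem this, mul_zero]

/-- The layer-cake formula. -/
lemma layer {N : ℕ} (hN : 2 ≤ N) {x : ℝ} (hx : x ∈ Icc (0:ℝ) 1) (μ : Measure ℝ)
    [IsProbabilityMeasure μ] (σ : ℝ → ℝ) (hσ : Measurable σ) (h01 : ∀ᵐ y ∂μ, σ y ∈ Icc (0:ℝ) 1) :
    ∫ y, hh N x (σ y) ∂μ = hh N x 1 + ∫ s in Ioc (0:ℝ) 1, kk N x s * (μ {y | σ y < s}).toReal := by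
  have hkint : Integrable (kk N x) (volume.restrict (Ioc 0 1)) := by
    have := ((kk_contOn hN hx).intervalIntegrable_of_Icc (μ := volume) zero_le_one)
    exact this.1
  set F : ℝ → ℝ → ℝ := fun y s => if σ y < s then kk N x s else 0 with hF
  have hFm : Measurable (Function.uncurry F) := by
    apply Measurable.ite
    · exact measurableSet_lt (hσ.comp measurable_fst) measurable_snd
    · unfold kk; fun_prop
    · exact measurable_const
  have hFi : Integrable (Function.uncurry F) (μ.prod (volume.restrict (Ioc 0 1))) := by
    have h1 : Integrable (fun p : ℝ × ℝ => kk N x p.2) (μ.prod (volume.restrict (Ioc 0 1))) :=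
      hkint.comp_snd μ
    refine h1.mono hFm.aestronglyMeasurable (Eventually.of_forall ?_)
    rintro ⟨y, s⟩
    simp only [Function.uncurry, hF]
    split_ifs <;> simp
  have hin : ∀ᵐ y ∂μ, hh N x (σ y) = hh N x 1 + ∫ s in Ioc (0:ℝ) 1, F y s := by
    filter_upwards [h01] with y hy
    have e : (fun s => F y s) = (Ioi (σ y)).indicator (kk N x) := by
      ext s; simp [hF, indicator]
    rw [e, integral_indicator measurableSet_Ioi, Measure.restrict_restrict measurableSet_Ioi]
    have e2 : Ioi (σ y) ∩ Ioc 0 1 = Ioc (σ y) 1 := by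
      ext s; simp only [mem_inter_iff, mem_Ioi, mem_Ioc]
      constructor
      · rintro ⟨a, b, c⟩; exact ⟨a, c⟩
      · rintro ⟨a, c⟩; exact ⟨a, lt_of_le_of_lt hy.1 a, c⟩
    rw [e2, ← intervalIntegral.integral_of_le hy.2, kk_integral hN hx hy]
    ring
  have hFi2 : Integrable (fun y => ∫ s in Ioc (0:ℝ) 1, F y s) μ := hFi.integral_prod_left
  rw [integral_congr_ae hin, integral_add (integrable_const _) hFi2]
  rw [integral_integral_swap hFi]
  congr 1
  · simp
  · congr 1
    ext s
    have hms : MeasurableSet {y | σ y < s} := measurableSet_lt hσ measurable_const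
    have e : (fun y => F y s) = {y | σ y < s}.indicator (fun _ => kk N x s) := by
      ext y; simp [hF, indicator]
    rw [e, integral_indicator_const _ hms, smul_eq_mul, mul_comm]
    rfl

lemma rhoT_prob {N : ℕ} (hN : 2 ≤ N) {t : ℝ} (ht : t ∈ Icc (0:ℝ) 1) :
    IsProbabilityMeasure (rhoT N t) := ⟨rhoT_univ hN ht⟩

lemma hh_nonneg {N : ℕ} (hN : 2 ≤ N) {x s : ℝ} (hx : x ∈ Icc (0:ℝ) 1) (hs : s ∈ Icc (0:ℝ) 1) :
    0 ≤ hh N x s :=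
  div_nonneg (mul_nonneg (Nat.cast_nonneg N) hx.1) (den_pos hN hs hx).le

lemma hh_meas (N : ℕ) (x : ℝ) : Measurable (hh N x) := by
  unfold hh; fun_prop

lemma Gt_eq {N : ℕ} (hN : 2 ≤ N) {t : ℝ} (ht : t ∈ Icc (0:ℝ) 1) (n : ℕ) (s : ℝ) :
    Gt N t n s = (rhoT N t {y | sVar N t y n < s}).toReal := by
  cases n with
  | succ n => rfl
  | zero =>
    simp only [Gt, sVar]
    by_cases h : s ≤ t
    · simp [h, not_lt.2 h]
    · simp [h, not_le.1 h, rhoT_univ hN ht]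

lemma FF_eq {N : ℕ} (hN : 2 ≤ N) {t : ℝ} (ht : t ∈ Icc (0:ℝ) 1) (n : ℕ) {x : ℝ}
    (hx : x ∈ Icc (0:ℝ) 1) :
    FF N t n x = hh N x 1 + ∫ s in Ioc (0:ℝ) 1, kk N x s * Gt N t n s := by
  have := rhoT_prob hN ht
  have h01 : ∀ᵐ y ∂(rhoT N t), sVar N t y n ∈ Icc (0:ℝ) 1 := by
    filter_upwards [rhoT_ae N t] with y hy using sVar_mem hN ht hy n
  simp only [Gt_eq hN ht]
  rw [← layer hN hx _ _ (sVar_meas N t n) h01, FF, BBL hN hx n t ht,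
    integral_eq_lintegral_of_nonneg_ae]
  · filter_upwards [h01] with y hy using hh_nonneg hN hx hy
  · exact ((hh_meas N x).comp (sVar_meas N t n)).aestronglyMeasurable

/-- Density of `ρ_N`. -/
noncomputable def dN (N : ℕ) (x : ℝ) : ℝ :=
  (Real.log ((N : ℝ) / ((N : ℝ) - 1)))⁻¹ / (x + (N : ℝ) - 1)

lemma log_pos' {N : ℕ} (hN : 2 ≤ N) : 0 < Real.log ((N : ℝ) / ((N : ℝ) - 1)) := by
  have h2 : (2:ℝ) ≤ N := by exact_mod_cast hN
  apply Real.log_pos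
  rw [lt_div_iff₀ (by linarith)]; linarith

lemma dN_nonneg {N : ℕ} (hN : 2 ≤ N) {x : ℝ} (hx : 0 ≤ x) : 0 ≤ dN N x := by
  have h2 : (2:ℝ) ≤ N := by exact_mod_cast hN
  exact div_nonneg (inv_nonneg.2 (log_pos' hN).le) (by linarith)

lemma dN_contOn {N : ℕ} (hN : 2 ≤ N) : ContinuousOn (dN N) (Icc 0 1) := by
  have h2 : (2:ℝ) ≤ N := by exact_mod_cast hN
  unfold dN
  apply ContinuousOn.div (by fun_prop) (by fun_prop)
  intro s hs
  have : 0 < s + N - 1 := by linarith [hs.1]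
  exact this.ne'

lemma rhoN_Icc {N : ℕ} (hN : 2 ≤ N) {x : ℝ} (hx : x ∈ Icc (0:ℝ) 1) :
    rhoN N (Icc 0 x) = ENNReal.ofReal
      (Real.log (((N:ℝ) - 1 + x) / ((N:ℝ) - 1)) / Real.log ((N : ℝ) / ((N : ℝ) - 1))) := by
  have h2 : (2:ℝ) ≤ N := by exact_mod_cast hN
  have hsub : uIcc 0 x ⊆ Icc 0 1 := by
    rw [uIcc_of_le hx.1]; exact Icc_subset_Icc_right hx.2
  have hi : IntervalIntegrable (dN N) volume 0 x := ((dN_contOn hN).mono hsub).intervalIntegrable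
  have hd : ∀ u ∈ uIcc 0 x, HasDerivAt (fun u : ℝ => (Real.log ((N : ℝ) / ((N : ℝ) - 1)))⁻¹ *
      Real.log (u + N - 1)) (dN N u) u := by
    intro u hu
    have hp : 0 < u + N - 1 := by linarith [(hsub hu).1]
    have h4 : HasDerivAt (fun u : ℝ => u + N - 1) 1 u := ((hasDerivAt_id u).add_const _).sub_const _
    exact ((h4.log hp.ne').const_mul _).congr_deriv (by unfold dN; ring)
  unfold rhoN
  rw [withDensity_apply _ measurableSet_Icc, Measure.restrict_restrict measurableSet_Icc,
    inter_eq_left.2 (Icc_subset_Icc_right hx.2), Measure.restrict_congr_set Ioc_ae_eq_Icc.symm]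
  change ∫⁻ a in Ioc 0 x, ENNReal.ofReal (dN N a) = _
  rw [← ofReal_integral_eq_lintegral_ofReal hi.1
    ((ae_restrict_iff' measurableSet_Ioc).2 (Eventually.of_forall fun y hy =>
      dN_nonneg hN hy.1.le)), ← intervalIntegral.integral_of_le hx.1,
    intervalIntegral.integral_eq_sub_of_hasDerivAt hd hi,
    Real.log_div (x := (N:ℝ) - 1 + x) (by linarith [hx.1]) (by linarith)]
  congr 1
  have e1 : x + (N:ℝ) - 1 = (N:ℝ) - 1 + x := by ring
  rw [e1, zero_add]; ring

lemma rhoN_prob {N : ℕ} (hN : 2 ≤ N) : IsProbabilityMeasure (rhoN N) := by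
  constructor
  have h := rhoN_Icc hN (x := 1) (by simp)
  rw [sub_add_cancel, div_self (log_pos' hN).ne', ENNReal.ofReal_one] at h
  rw [← h]
  unfold rhoN
  rw [withDensity_apply _ measurableSet_Icc, withDensity_apply _ MeasurableSet.univ]
  simp

lemma rhoN_ae (N : ℕ) : ∀ᵐ y ∂(rhoN N), y ∈ Icc (0:ℝ) 1 := by
  have : rhoN N ≪ volume.restrict (Icc 0 1) := withDensity_absolutelyContinuous _ _
  exact this.ae_le (ae_restrict_mem measurableSet_Icc)

lemma GN_eq' {N : ℕ} (hN : 2 ≤ N) (s : ℝ) : GN N s = (rhoN N {y | id y < s}).toReal := by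
  unfold GN
  congr 1
  apply measure_congr
  have hac : rhoN N ≪ volume :=
    (withDensity_absolutelyContinuous _ _).trans Measure.absolutelyContinuous_restrict
  have hne : ∀ᵐ y ∂(rhoN N), y ≠ s := hac.ae_le (Measure.ae_ne volume s)
  filter_upwards [rhoN_ae N, hne] with y hy hy2
  apply propext
  change (0 ≤ y ∧ y ≤ s) ↔ y < s
  exact ⟨fun h => lt_of_le_of_ne h.2 hy2, fun h => ⟨hy.1, h.le⟩⟩

lemma GN_eq {N : ℕ} (hN : 2 ≤ N) {x : ℝ} (hx : x ∈ Icc (0:ℝ) 1) :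
    GN N x = hh N x 1 + ∫ s in Ioc (0:ℝ) 1, kk N x s * GN N s := by
  have := rhoN_prob hN
  have h2 : (2:ℝ) ≤ N := by exact_mod_cast hN
  have hL := log_pos' hN
  conv_rhs => simp only [GN_eq' hN]
  rw [← layer hN hx (rhoN N) id measurable_id (rhoN_ae N)]
  have hsub : uIcc (0:ℝ) 1 ⊆ Icc 0 1 := by rw [uIcc_of_le zero_le_one]
  have hc : ContinuousOn (fun s => dN N s * hh N x s) (uIcc 0 1) := by
    apply ((dN_contOn hN).mono hsub).mul
    intro s hs
    exact (hh_deriv_s hN (hsub hs) hx).continuousAt.continuousWithinAt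
  have hd : ∀ u ∈ uIcc (0:ℝ) 1, HasDerivAt (fun u : ℝ =>
      (Real.log ((N : ℝ) / ((N : ℝ) - 1)))⁻¹ *
      (Real.log (u + N - 1) - Real.log ((N:ℝ) - (1 - x) * (1 - u)))) (dN N u * hh N x u) u := by
    intro u hu
    have hp : 0 < u + N - 1 := by linarith [(hsub hu).1]
    have hq := den_pos hN (hsub hu) hx
    have h4 : HasDerivAt (fun u : ℝ => u + N - 1) 1 u := ((hasDerivAt_id u).add_const _).sub_const _
    have h5 : HasDerivAt (fun s : ℝ => (N : ℝ) - (1 - x) * (1 - s)) (-((1 - x) * (-1))) u :=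
      (((hasDerivAt_id u).const_sub 1).const_mul (1 - x)).const_sub (N:ℝ)
    refine (((h4.log hp.ne').fun_sub (h5.log hq.ne')).const_mul _).congr_deriv ?_
    unfold dN hh
    field_simp
    ring
  have e : ∫ y, hh N x (id y) ∂(rhoN N) = ∫ s in (0:ℝ)..1, dN N s * hh N x s := by
    have hm : Measurable (fun s => ENNReal.ofReal (dN N s)) := by unfold dN; fun_prop
    change ∫ y, hh N x y ∂((volume.restrict (Icc (0:ℝ) 1)).withDensity
      fun s => ENNReal.ofReal (dN N s)) = _
    rw [integral_withDensity_eq_integral_toReal_smul hm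
      (Eventually.of_forall fun _ => ENNReal.ofReal_lt_top),
      intervalIntegral.integral_of_le zero_le_one, Measure.restrict_congr_set Ioc_ae_eq_Icc.symm]
    apply setIntegral_congr_fun measurableSet_Ioc
    intro s hs
    simp only [smul_eq_mul]
    rw [ENNReal.toReal_ofReal (dN_nonneg hN hs.1.le)]
  rw [e, intervalIntegral.integral_eq_sub_of_hasDerivAt hd hc.intervalIntegrable, GN,
    rhoN_Icc hN hx, ENNReal.toReal_ofReal]
  · rw [Real.log_div (by linarith [hx.1]) (by linarith)]
    have e1 : (1:ℝ) + N - 1 = N := by ring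
    have e2 : (N:ℝ) - (1 - x) * (1 - 1) = N := by ring
    have e3 : (N:ℝ) - (1 - x) * (1 - 0) = N - 1 + x := by ring
    rw [e1, e2, e3, zero_add]
    ring
  · apply div_nonneg _ hL.le
    apply Real.log_nonneg
    rw [le_div_iff₀ (by linarith)]; linarith [hx.1]

lemma beta_bound {N : ℕ} (hN : 2 ≤ N) {x : ℝ} (hx : x ∈ Icc (0:ℝ) 1) :
    hh N x 0 - hh N x 1 ≤ 2 * (N : ℝ) - 1 - 2 * Real.sqrt ((N : ℝ) * ((N : ℝ) - 1)) := by
  have h2 : (2:ℝ) ≤ N := by exact_mod_cast hN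
  set r := Real.sqrt ((N : ℝ) * ((N : ℝ) - 1)) with hr
  have hr2 : r ^ 2 = (N : ℝ) * ((N : ℝ) - 1) := Real.sq_sqrt (by nlinarith)
  have hu : 0 < (N:ℝ) - 1 + x := by linarith [hx.1]
  have e : hh N x 0 - hh N x 1 = x * (1 - x) / ((N:ℝ) - 1 + x) := by
    unfold hh
    have e1 : (N:ℝ) - (1 - x) * (1 - 0) = N - 1 + x := by ring
    have e2 : (N:ℝ) - (1 - x) * (1 - 1) = N := by ring
    rw [e1, e2]; field_simp; ring
  rw [e, div_le_iff₀ hu]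
  nlinarith [sq_nonneg ((N:ℝ) - 1 + x - r)]

lemma GN_bdd {N : ℕ} (hN : 2 ≤ N) (s : ℝ) : 0 ≤ GN N s ∧ GN N s ≤ 1 := by
  have := rhoN_prob hN
  exact ⟨ENNReal.toReal_nonneg, measureReal_le_one⟩

lemma Gt_bdd {N : ℕ} (hN : 2 ≤ N) {t : ℝ} (ht : t ∈ Icc (0:ℝ) 1) (n : ℕ) (s : ℝ) :
    0 ≤ Gt N t n s ∧ Gt N t n s ≤ 1 := by
  have := rhoT_prob hN ht
  rw [Gt_eq hN ht]
  exact ⟨ENNReal.toReal_nonneg, measureReal_le_one⟩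

lemma GN_mono {N : ℕ} (hN : 2 ≤ N) : Monotone (GN N) := by
  have := rhoN_prob hN
  intro a b hab
  exact measureReal_mono (Icc_subset_Icc_right hab)

lemma Gt_mono {N : ℕ} (hN : 2 ≤ N) {t : ℝ} (ht : t ∈ Icc (0:ℝ) 1) (n : ℕ) :
    Monotone (Gt N t n) := by
  have := rhoT_prob hN ht
  intro a b hab
  rw [Gt_eq hN ht, Gt_eq hN ht]
  exact measureReal_mono (fun y hy => lt_of_lt_of_le hy hab)

lemma le_alpha {N : ℕ} (hN : 2 ≤ N) {t : ℝ} (ht : t ∈ Icc (0:ℝ) 1) (n : ℕ) {s : ℝ}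
    (hs : s ∈ Icc (0:ℝ) 1) : |Gt N t n s - GN N s| ≤ alpha N t n := by
  refine le_ciSup (f := fun s : Set.Icc (0 : ℝ) 1 => |Gt N t n s - GN N s|) ⟨1, ?_⟩ ⟨s, hs⟩
  rintro _ ⟨u, rfl⟩
  have h1 := Gt_bdd hN ht n u
  have h2 := GN_bdd hN u
  simp only
  rw [abs_le]
  constructor <;> linarith

theorem stmt7 (N : ℕ) (hN : 2 ≤ N) (t : ℝ) (ht : t ∈ Set.Icc (0 : ℝ) 1)
    (n : ℕ) (x : ℝ) (hx : x ∈ Set.Icc (0 : ℝ) 1) :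
    |FF N t n x - GN N x|
      ≤ (2 * (N : ℝ) - 1 - 2 * Real.sqrt ((N : ℝ) * ((N : ℝ) - 1))) * alpha N t n := by
  have hkint : Integrable (kk N x) (volume.restrict (Ioc 0 1)) :=
    ((kk_contOn hN hx).intervalIntegrable_of_Icc (μ := volume) zero_le_one).1
  have hint : ∀ G : ℝ → ℝ, Monotone G → (∀ s, 0 ≤ G s ∧ G s ≤ 1) →
      Integrable (fun s => kk N x s * G s) (volume.restrict (Ioc 0 1)) := by
    intro G hG hb
    refine hkint.mul_bdd (c := 1) hG.measurable.aestronglyMeasurable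
      (Eventually.of_forall fun s => ?_)
    rw [Real.norm_eq_abs, abs_of_nonneg (hb s).1]
    exact (hb s).2
  have hk0 : ∀ s, 0 ≤ kk N x s := fun s =>
    div_nonneg (mul_nonneg (mul_nonneg (Nat.cast_nonneg N) hx.1) (sub_nonneg.2 hx.2)) (sq_nonneg _)
  have ha0 : 0 ≤ alpha N t n := (abs_nonneg _).trans (le_alpha hN ht n hx)
  rw [FF_eq hN ht n hx, GN_eq hN hx, add_sub_add_left_eq_sub,
    ← integral_sub (hint _ (Gt_mono hN ht n) (Gt_bdd hN ht n)) (hint _ (GN_mono hN) (GN_bdd hN))]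
  have hle : ‖∫ s in Ioc (0:ℝ) 1, (kk N x s * Gt N t n s - kk N x s * GN N s)‖ ≤
      ∫ s in Ioc (0:ℝ) 1, kk N x s * alpha N t n := by
    apply norm_integral_le_of_norm_le (hkint.mul_const _)
    refine (ae_restrict_iff' measurableSet_Ioc).2 (Eventually.of_forall fun s hs => ?_)
    rw [← mul_sub, norm_mul, Real.norm_eq_abs, Real.norm_eq_abs, abs_of_nonneg (hk0 s)]
    exact mul_le_mul_of_nonneg_left (le_alpha hN ht n ⟨hs.1.le, hs.2⟩) (hk0 s)
  have hk := kk_integral hN hx (s := 0) (by simp)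
  rw [intervalIntegral.integral_of_le zero_le_one] at hk
  rw [integral_mul_const, hk, Real.norm_eq_abs] at hle
  exact hle.trans (mul_le_mul_of_nonneg_right (beta_bound hN hx) ha0)
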